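/- (Local Lipschitz continuity of the Itô–Lyons map.) Fix α ∈ (1/3, 1/2] and M > 0. Let f : ℝ^e → L(ℝ^d, ℝ^e) be bounded with bounded first, second and third derivatives (f ∈ C³_b). Let 𝐗 = (X, 𝕏) and 𝐗̃ = (X̃, 𝕏̃) be α-Hölder rough paths with values in ℝ^d satisfying ‖𝐗‖_{𝒞^α} ≤ M and ‖𝐗̃‖_{𝒞^α} ≤ M, where ‖𝐗‖_{𝒞^α} := ‖X‖_α + ‖𝕏‖_{2α}^{1/2}. Then there exist a time T₀ > 0 and a constant C, depending only on M, α and f, with the following property: if Y and Ỹ are the unique solutions on [0,T₀] of the rough differential equations dY = f(Y) d𝐗 with Y_0 = ξ and dỸ = f(Ỹ) d𝐗̃ with Ỹ_0 = ξ̃, then ‖Y − Ỹ‖_α ≤ C (|ξ − ξ̃| + ϱ_α(𝐗, 𝐗̃)), where ϱ_α(𝐗,𝐗̃) := ‖X − X̃‖_α + ‖𝕏 − 𝕏̃‖_{2α}. -/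

import Mathlib

noncomputable section

open scoped BigOperators

/-- `ℝ^d` with the Euclidean norm. -/
abbrev Euc (d : ℕ) := EuclideanSpace ℝ (Fin d)

/-- The set of ratios `‖X_{s,t}‖ / (t-s)^α` over `0 ≤ s < t ≤ T`; its supremum is the
`α`-Hölder norm of the path `X` on `[0,T]`. -/
def holderRatios (α T : ℝ) {V : Type*} [NormedAddCommGroup V] (X : ℝ → V) : Set ℝ :=
  {r | ∃ s t : ℝ, 0 ≤ s ∧ s < t ∧ t ≤ T ∧ r = ‖X t - X s‖ / (t - s) ^ α}

/-- The set of ratios `‖𝕏_{s,t}‖ / |t-s|^{2α}` over `s ≠ t` in `[0,T]`; its supremum is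
the `2α`-Hölder norm of the two-parameter function `𝕏` on `[0,T]²`. -/
def holderRatios2 (α T : ℝ) {V : Type*} [NormedAddCommGroup V] (XX : ℝ → ℝ → V) : Set ℝ :=
  {r | ∃ s t : ℝ, 0 ≤ s ∧ 0 ≤ t ∧ s ≤ T ∧ t ≤ T ∧ s ≠ t ∧
    r = ‖XX s t‖ / |t - s| ^ (2 * α)}

/-- Contraction of a (continuous) bilinear map `B : ℝ^d × ℝ^d → ℝ^e` against a tensor
`M ∈ ℝ^{d×d}`, i.e. `Σ_{i,j} M^{ij} B(e_i, e_j)`. -/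
def contractTensor {d e : ℕ} (B : Euc d →L[ℝ] Euc d →L[ℝ] Euc e)
    (M : EuclideanSpace ℝ (Fin d × Fin d)) : Euc e :=
  ∑ i : Fin d, ∑ j : Fin d,
    M (i, j) • B (EuclideanSpace.single i (1 : ℝ)) (EuclideanSpace.single j (1 : ℝ))

/-- `(X, 𝕏)` is an `α`-Hölder rough path on `[0,1]` with values in `ℝ^d`:
`X` is continuous, Chen's identity holds, and both Hölder norms are finite. -/
def IsRoughPath (α : ℝ) {d : ℕ} (X : ℝ → Euc d)
    (XX : ℝ → ℝ → EuclideanSpace ℝ (Fin d × Fin d)) : Prop :=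
  ContinuousOn X (Set.Icc 0 1) ∧
  (∀ s u t : ℝ, 0 ≤ s → s ≤ u → u ≤ t → t ≤ 1 → ∀ i j : Fin d,
    XX s t (i, j) - XX s u (i, j) - XX u t (i, j) = (X u i - X s i) * (X t j - X u j)) ∧
  BddAbove (holderRatios α 1 X) ∧ BddAbove (holderRatios2 α 1 XX)

/-- `Y : [0,T₀] → ℝ^e` solves the RDE `dY = f(Y) d𝐗`, `Y_0 = ξ`, on `[0,T₀]`: `Y` is
continuous, `(Y, f∘Y)` is controlled by `X`, and for every `t ∈ [0,T₀]` the compensated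
Riemann sums `Σ ( f(Y_u) X_{u,v} + Df(Y_u)f(Y_u) 𝕏_{u,v} )` over partitions of `[0,t]`
converge to `Y_t - ξ` as the mesh tends to `0`. -/
def SolvesRDE (α T₀ : ℝ) {d e : ℕ} (X : ℝ → Euc d)
    (XX : ℝ → ℝ → EuclideanSpace ℝ (Fin d × Fin d))
    (f : Euc e → (Euc d →L[ℝ] Euc e)) (ξ : Euc e) (Y : ℝ → Euc e) : Prop :=
  ContinuousOn Y (Set.Icc 0 T₀) ∧
  BddAbove (holderRatios α T₀ (fun t => f (Y t))) ∧
  BddAbove (holderRatios2 α T₀ (fun s t => Y t - Y s - (f (Y s)) (X t - X s))) ∧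
  ∀ t ∈ Set.Icc (0 : ℝ) T₀, ∀ ε : ℝ, 0 < ε → ∃ δ : ℝ, 0 < δ ∧
    ∀ (k : ℕ) (τ : ℕ → ℝ), τ 0 = 0 → τ k = t →
      (∀ i < k, τ i < τ (i + 1)) → (∀ i < k, τ (i + 1) - τ i ≤ δ) →
      ‖(∑ i ∈ Finset.range k,
          ((f (Y (τ i))) (X (τ (i + 1)) - X (τ i)) +
            contractTensor
              ((fderiv ℝ f (Y (τ i))).comp (f (Y (τ i))))
              (XX (τ i) (τ (i + 1))))) - (Y t - ξ)‖ ≤ ε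

section helpers
set_option maxSynthPendingDepth 3

section calculus

variable {E H : Type*} [NormedAddCommGroup E] [NormedSpace ℝ E]
  [NormedAddCommGroup H] [NormedSpace ℝ H]

/-- Uniform bounds on the first derivatives, from iterated derivatives. -/
lemma fderiv_bounds_of_iter {g : E → H} {N : ℝ}
    (hb : ∀ i : ℕ, i ≤ 2 → ∀ x, ‖iteratedFDeriv ℝ i g x‖ ≤ N) :
    (∀ x, ‖g x‖ ≤ N) ∧ (∀ x, ‖fderiv ℝ g x‖ ≤ N) ∧
      (∀ x, ‖fderiv ℝ (fderiv ℝ g) x‖ ≤ N) := by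
  refine ⟨fun x => ?_, fun x => ?_, fun x => ?_⟩
  · simpa using hb 0 (by norm_num) x
  · have := hb 1 (by norm_num) x
    rw [← norm_iteratedFDeriv_fderiv] at this
    simpa using this
  · have := hb 2 (by norm_num) x
    rw [← norm_iteratedFDeriv_fderiv, ← norm_iteratedFDeriv_fderiv] at this
    simpa using this

lemma lip_of_fderiv {g : E → H} {L : ℝ} (hg : Differentiable ℝ g)
    (h1 : ∀ x, ‖fderiv ℝ g x‖ ≤ L) (a b : E) : ‖g a - g b‖ ≤ L * ‖a - b‖ :=
  convex_univ.norm_image_sub_le_of_norm_fderiv_le (fun x _ => hg x) (fun x _ => h1 x)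
    (Set.mem_univ b) (Set.mem_univ a)

lemma four_point {g : E → H} {L1 L2 : ℝ} (hg : Differentiable ℝ g)
    (hg' : Differentiable ℝ (fderiv ℝ g))
    (h1 : ∀ x, ‖fderiv ℝ g x‖ ≤ L1) (h2 : ∀ x, ‖fderiv ℝ (fderiv ℝ g) x‖ ≤ L2)
    (y y' h h' : E) :
    ‖(g (y + h) - g y) - (g (y' + h') - g y')‖ ≤ L2 * ‖h‖ * ‖y - y'‖ + L1 * ‖h - h'‖ := by
  have key : ‖(g (y + h) - g y) - (g (y' + h) - g y')‖ ≤ L2 * ‖h‖ * ‖y - y'‖ := by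
    have hd : ∀ x, HasFDerivAt (fun x => g (x + h) - g x)
        (fderiv ℝ g (x + h) - fderiv ℝ g x) x := fun x =>
      (hasFDerivAt_comp_add_right h |>.2 (hg (x + h)).hasFDerivAt).sub (hg x).hasFDerivAt
    refine convex_univ.norm_image_sub_le_of_norm_hasFDerivWithin_le
      (f := fun x => g (x + h) - g x)
      (fun x _ => (hd x).hasFDerivWithinAt) (fun x _ => ?_) (Set.mem_univ y') (Set.mem_univ y)
    simpa using lip_of_fderiv hg' h2 (x + h) x
  have k2 : ‖g (y' + h) - g (y' + h')‖ ≤ L1 * ‖h - h'‖ := by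
    simpa using lip_of_fderiv hg h1 (y' + h) (y' + h')
  calc _ = ‖((g (y + h) - g y) - (g (y' + h) - g y')) + (g (y' + h) - g (y' + h'))‖ := by
        congr 1; abel
    _ ≤ _ := (norm_add_le _ _).trans (add_le_add key k2)

lemma taylor_diff_h {g : E → H} {L2 : ℝ} (hg : Differentiable ℝ g)
    (hg' : Differentiable ℝ (fderiv ℝ g))
    (h2 : ∀ x, ‖fderiv ℝ (fderiv ℝ g) x‖ ≤ L2)
    (y h h' : E) :
    ‖(g (y + h) - g y - fderiv ℝ g y h) - (g (y + h') - g y - fderiv ℝ g y h')‖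
      ≤ L2 * (‖h‖ + ‖h'‖) * ‖h - h'‖ := by
  have hL : 0 ≤ L2 := (norm_nonneg _).trans (h2 y)
  have hd : ∀ x, HasFDerivAt (fun x => g (y + x) - g y - fderiv ℝ g y x)
      (fderiv ℝ g (y + x) - fderiv ℝ g y) x := fun x =>
    ((hasFDerivAt_comp_add_left y |>.2 (hg (y + x)).hasFDerivAt).sub_const (g y)).sub
      (fderiv ℝ g y).hasFDerivAt
  refine (convex_closedBall (0 : E) (‖h‖ + ‖h'‖)).norm_image_sub_le_of_norm_hasFDerivWithin_le
      (f := fun x => g (y + x) - g y - fderiv ℝ g y x)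
      (fun x _ => (hd x).hasFDerivWithinAt) (fun x hx => ?_) ?_ ?_
  · have := lip_of_fderiv hg' h2 (y + x) y
    rw [add_sub_cancel_left] at this
    refine this.trans (mul_le_mul_of_nonneg_left ?_ hL)
    simpa using hx
  · simp
  · simp

lemma taylor_le {g : E → H} {L2 : ℝ} (hg : Differentiable ℝ g)
    (hg' : Differentiable ℝ (fderiv ℝ g))
    (h2 : ∀ x, ‖fderiv ℝ (fderiv ℝ g) x‖ ≤ L2) (y h : E) :
    ‖g (y + h) - g y - fderiv ℝ g y h‖ ≤ L2 * ‖h‖ ^ 2 := by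
  have := taylor_diff_h hg hg' h2 y h 0
  simp only [add_zero, sub_self, map_zero, sub_zero, norm_zero] at this
  linarith [this, sq (‖h‖), mul_assoc L2 ‖h‖ ‖h‖, congrArg (fun x => L2 * x) (sq (‖h‖))]

lemma taylor_diff {g : E → H} {L2 L3 : ℝ} (hg : Differentiable ℝ g)
    (hg' : Differentiable ℝ (fderiv ℝ g)) (hg'' : Differentiable ℝ (fderiv ℝ (fderiv ℝ g)))
    (h2 : ∀ x, ‖fderiv ℝ (fderiv ℝ g) x‖ ≤ L2)
    (h3 : ∀ x, ‖fderiv ℝ (fderiv ℝ (fderiv ℝ g)) x‖ ≤ L3)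
    (y y' h h' : E) :
    ‖(g (y + h) - g y - fderiv ℝ g y h) - (g (y' + h') - g y' - fderiv ℝ g y' h')‖
      ≤ L3 * ‖h‖ ^ 2 * ‖y - y'‖ + L2 * (‖h‖ + ‖h'‖) * ‖h - h'‖ := by
  have key : ‖(g (y + h) - g y - fderiv ℝ g y h) - (g (y' + h) - g y' - fderiv ℝ g y' h)‖
      ≤ L3 * ‖h‖ ^ 2 * ‖y - y'‖ := by
    have hd : ∀ x, HasFDerivAt (fun x => g (x + h) - g x - fderiv ℝ g x h)
        (fderiv ℝ g (x + h) - fderiv ℝ g x - (fderiv ℝ (fderiv ℝ g) x).flip h) x := fun x => by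
      refine ((hasFDerivAt_comp_add_right h |>.2 (hg (x + h)).hasFDerivAt).sub (hg x).hasFDerivAt).sub ?_
      have := (hg' x).hasFDerivAt.clm_apply (hasFDerivAt_const h x)
      simpa using this
    refine convex_univ.norm_image_sub_le_of_norm_hasFDerivWithin_le
      (f := fun x => g (x + h) - g x - fderiv ℝ g x h)
      (fun x _ => (hd x).hasFDerivWithinAt) (fun x _ => ?_) (Set.mem_univ y') (Set.mem_univ y)
    have hsymm : (fderiv ℝ (fderiv ℝ g) x).flip h = fderiv ℝ (fderiv ℝ g) x h := by
      ext k
      exact (second_derivative_symmetric (f := g) (f' := fderiv ℝ g)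
        (fun z => (hg z).hasFDerivAt) (hg' x).hasFDerivAt k h)
    rw [hsymm]
    exact taylor_le hg' hg'' h3 x h
  have k2 := taylor_diff_h hg hg' h2 y' h h'
  calc _ = ‖((g (y + h) - g y - fderiv ℝ g y h) - (g (y' + h) - g y' - fderiv ℝ g y' h)) +
        ((g (y' + h) - g y' - fderiv ℝ g y' h) - (g (y' + h') - g y' - fderiv ℝ g y' h'))‖ := by
        congr 1; abel
    _ ≤ _ := (norm_add_le _ _).trans (add_le_add key k2)

lemma clm_diff_le (L L' : E →L[ℝ] H) (x x' : E) :
    ‖L x - L' x'‖ ≤ ‖L - L'‖ * ‖x‖ + ‖L'‖ * ‖x - x'‖ := by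
  calc _ = ‖(L - L') x + L' (x - x')‖ := by congr 1; simp
    _ ≤ _ := (norm_add_le _ _).trans (add_le_add ((L - L').le_opNorm x) (L'.le_opNorm _))

end calculus

section contract

variable {d e : ℕ}

lemma contract_sub_left (B B' : Euc d →L[ℝ] Euc d →L[ℝ] Euc e)
    (W : EuclideanSpace ℝ (Fin d × Fin d)) :
    contractTensor (B - B') W = contractTensor B W - contractTensor B' W := by
  simp [contractTensor, smul_sub, Finset.sum_sub_distrib]

lemma contract_sub_right (B : Euc d →L[ℝ] Euc d →L[ℝ] Euc e)
    (W W' : EuclideanSpace ℝ (Fin d × Fin d)) :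
    contractTensor B (W - W') = contractTensor B W - contractTensor B W' := by
  simp [contractTensor, sub_smul, Finset.sum_sub_distrib]

lemma contract_norm (B : Euc d →L[ℝ] Euc d →L[ℝ] Euc e)
    (W : EuclideanSpace ℝ (Fin d × Fin d)) :
    ‖contractTensor B W‖ ≤ (d : ℝ) * d * ‖B‖ * ‖W‖ := by
  unfold contractTensor
  calc _ ≤ ∑ i : Fin d, ∑ j : Fin d, ‖B‖ * ‖W‖ := by
        refine (norm_sum_le _ _).trans (Finset.sum_le_sum fun i _ => ?_)
        refine (norm_sum_le _ _).trans (Finset.sum_le_sum fun j _ => ?_)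
        rw [norm_smul, mul_comm]
        refine mul_le_mul ?_ (PiLp.norm_apply_le W (i, j)) (norm_nonneg _) (norm_nonneg _)
        refine (B.le_opNorm₂ _ _).trans ?_
        simp
    _ = _ := by simp; ring

lemma contract_chen (B : Euc d →L[ℝ] Euc d →L[ℝ] Euc e)
    (W1 W2 W3 : EuclideanSpace ℝ (Fin d × Fin d)) (x y : Euc d)
    (h : ∀ i j, W1 (i, j) - W2 (i, j) - W3 (i, j) = x i * y j) :
    contractTensor B W1 - contractTensor B W2 - contractTensor B W3 = B x y := by
  rw [← contract_sub_right, ← contract_sub_right]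
  have hx : x = ∑ i, x i • EuclideanSpace.single i (1 : ℝ) := by
    ext k; simp [Finset.sum_apply, Pi.single_apply]
  have hy : y = ∑ i, y i • EuclideanSpace.single i (1 : ℝ) := by
    ext k; simp [Finset.sum_apply, Pi.single_apply]
  conv_rhs => rw [hx, hy]
  simp only [contractTensor, map_sum, map_smul, _root_.sum_apply,
    _root_.smul_apply, PiLp.sub_apply, h, Finset.smul_sum, smul_smul]
  rw [Finset.sum_comm]
  simp only [mul_comm]

end contract

section sewing

variable {E : Type*} [NormedAddCommGroup E]

/-- `v` is a Riemann sum of `A` over a partition of `[a,b]` with mesh at most `δ`. -/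
def IsPartSum (A : ℝ → ℝ → E) (δ a b : ℝ) (v : E) : Prop :=
  ∃ (k : ℕ) (τ : ℕ → ℝ), τ 0 = a ∧ τ k = b ∧ (∀ i < k, τ i < τ (i + 1)) ∧
    (∀ i < k, τ (i + 1) - τ i ≤ δ) ∧ ∑ i ∈ Finset.range k, A (τ i) (τ (i + 1)) = v

lemma IsPartSum.nil (A : ℝ → ℝ → E) (δ a : ℝ) : IsPartSum A δ a a 0 :=
  ⟨0, fun _ => a, rfl, rfl, by simp, by simp, by simp⟩

lemma IsPartSum.single (A : ℝ → ℝ → E) {δ a b : ℝ} (h : a < b) (h' : b - a ≤ δ) :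
    IsPartSum A δ a b (A a b) := by
  refine ⟨1, fun i => if i = 0 then a else b, by simp, by simp, ?_, ?_, by simp⟩
  · intro i hi
    obtain rfl : i = 0 := by omega
    simpa using h
  · intro i hi
    obtain rfl : i = 0 := by omega
    simpa using h'

lemma IsPartSum.concat {A : ℝ → ℝ → E} {δ a b c : ℝ} {v w : E}
    (h1 : IsPartSum A δ a b v) (h2 : IsPartSum A δ b c w) : IsPartSum A δ a c (v + w) := by
  obtain ⟨k, τ, h0, hk, hlt, hm, hs⟩ := h1
  obtain ⟨l, σ, g0, gl, glt, gm, gs⟩ := h2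
  let ρ : ℕ → ℝ := fun i => if i < k then τ i else σ (i - k)
  have e1 : ∀ i ≤ k, ρ i = τ i := by
    intro i hi
    by_cases h : i < k
    · simp [ρ, h]
    · obtain rfl : i = k := by omega
      simp [ρ, g0, hk]
  have e2 : ∀ i, ρ (k + i) = σ i := by
    intro i
    simp [ρ]
  refine ⟨k + l, ρ, ?_, ?_, ?_, ?_, ?_⟩
  · rw [e1 0 (by omega), h0]
  · rw [e2, gl]
  · intro i hi
    by_cases h : i < k
    · rw [e1 i h.le, e1 (i + 1) h]; exact hlt i h
    · obtain ⟨j, rfl⟩ : ∃ j, i = k + j := ⟨i - k, by omega⟩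
      rw [add_assoc, e2, e2]; exact glt j (by omega)
  · intro i hi
    by_cases h : i < k
    · rw [e1 i h.le, e1 (i + 1) h]; exact hm i h
    · obtain ⟨j, rfl⟩ : ∃ j, i = k + j := ⟨i - k, by omega⟩
      rw [add_assoc, e2, e2]; exact gm j (by omega)
  · rw [Finset.sum_range_add, ← hs, ← gs]
    congr 1
    · refine Finset.sum_congr rfl fun i hi => ?_
      have := Finset.mem_range.mp hi
      rw [e1 i this.le, e1 (i + 1) this]
    · refine Finset.sum_congr rfl fun i hi => ?_
      rw [add_assoc, e2, e2]

/-- Dyadic Riemann sums, defined by recursive bisection. -/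
def dyadSum (A : ℝ → ℝ → E) : ℕ → ℝ → ℝ → E
  | 0, a, b => A a b
  | n + 1, a, b => dyadSum A n a ((a + b) / 2) + dyadSum A n ((a + b) / 2) b

lemma dyadSum_isPartSum (A : ℝ → ℝ → E) (n : ℕ) {δ : ℝ} :
    ∀ {a b : ℝ}, a < b → (b - a) / 2 ^ n ≤ δ → IsPartSum A δ a b (dyadSum A n a b) := by
  induction n with
  | zero => intro a b h h'; exact IsPartSum.single A h (by simpa using h')
  | succ n ih =>
    intro a b h h'
    have e : (b - a) / 2 ^ (n + 1) = ((b - a) / 2) / 2 ^ n := by rw [pow_succ]; field_simp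
    rw [e] at h'
    refine (ih (a := a) (b := (a + b) / 2) (by linarith) ?_).concat
      (ih (a := (a + b) / 2) (b := b) (by linarith) ?_)
    · convert h' using 2; ring
    · convert h' using 2; ring

lemma dyadSum_sub (A B : ℝ → ℝ → E) (n : ℕ) : ∀ a b : ℝ,
    dyadSum (fun s t => A s t - B s t) n a b = dyadSum A n a b - dyadSum B n a b := by
  induction n with
  | zero => intro a b; rfl
  | succ n ih => intro a b; simp only [dyadSum, ih]; abel

/-- Sewing bound for dyadic sums. -/
lemma dyadSum_bound {α T K c : ℝ} (hK : 0 ≤ K) (hc0 : 0 ≤ c)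
    (hc : 2 * c * ((1 / 2 : ℝ) ^ α) ^ 3 + 1 ≤ c)
    {A : ℝ → ℝ → E}
    (hA : ∀ s u t, 0 ≤ s → s ≤ u → u ≤ t → t ≤ T →
      ‖A s t - A s u - A u t‖ ≤ K * ((t - s) ^ α) ^ 3) (n : ℕ) :
    ∀ s t : ℝ, 0 ≤ s → s ≤ t → t ≤ T →
      ‖dyadSum A n s t - A s t‖ ≤ c * K * ((t - s) ^ α) ^ 3 := by
  induction n with
  | zero =>
    intro s t h0 h1 h2
    have := Real.rpow_nonneg (sub_nonneg.2 h1) α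
    simp only [dyadSum, sub_self, norm_zero]
    positivity
  | succ n ih =>
    intro s t h0 h1 h2
    have i1 := ih s ((s + t) / 2) h0 (by linarith) (by linarith)
    have i2 := ih ((s + t) / 2) t (by linarith) (by linarith) h2
    have i3 := hA s ((s + t) / 2) t h0 (by linarith) (by linarith) h2
    have e1 : (s + t) / 2 - s = (1 / 2) * (t - s) := by ring
    have e2 : t - (s + t) / 2 = (1 / 2) * (t - s) := by ring
    rw [e1, Real.mul_rpow (by norm_num) (by linarith), mul_pow] at i1
    rw [e2, Real.mul_rpow (by norm_num) (by linarith), mul_pow] at i2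
    have hp : 0 ≤ ((t - s) ^ α) ^ 3 := pow_nonneg (Real.rpow_nonneg (by linarith) _) _
    set q := ((t - s) ^ α) ^ 3
    set θ := ((1 / 2 : ℝ) ^ α) ^ 3
    calc _ = ‖(dyadSum A n s ((s + t) / 2) - A s ((s + t) / 2)) +
          (dyadSum A n ((s + t) / 2) t - A ((s + t) / 2) t) -
          (A s t - A s ((s + t) / 2) - A ((s + t) / 2) t)‖ := by
          congr 1; simp only [dyadSum]; abel
      _ ≤ c * K * (θ * q) + c * K * (θ * q) + K * q := by
          refine (norm_sub_le _ _).trans (add_le_add ((norm_add_le _ _).trans ?_) i3)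
          exact add_le_add i1 i2
      _ = (2 * c * θ + 1) * (K * q) := by ring
      _ ≤ c * (K * q) := by gcongr
      _ = _ := by ring

/-- Riemann sums converging on all `[0,t]` converge on all `[s,t]`, along dyadic sums. -/
lemma dyadSum_tendsto {T : ℝ} {A : ℝ → ℝ → E} {Y : ℝ → E} {ξ : E}
    (h : ∀ t ∈ Set.Icc (0 : ℝ) T, ∀ ε : ℝ, 0 < ε → ∃ δ : ℝ, 0 < δ ∧
      ∀ v, IsPartSum A δ 0 t v → ‖v - (Y t - ξ)‖ ≤ ε)
    {s t : ℝ} (hs : 0 ≤ s) (hst : s < t) (ht : t ≤ T) :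
    Filter.Tendsto (fun n => dyadSum A n s t) Filter.atTop (nhds (Y t - Y s)) := by
  rw [Metric.tendsto_atTop]
  intro ε hε
  obtain ⟨δ1, hδ1, h1⟩ := h s ⟨hs, by linarith⟩ (ε / 3) (by linarith)
  obtain ⟨δ2, hδ2, h2⟩ := h t ⟨by linarith, ht⟩ (ε / 3) (by linarith)
  have hδ : 0 < min δ1 δ2 := lt_min hδ1 hδ2
  have mono : ∀ {δ δ' a b v}, δ ≤ δ' → IsPartSum A δ a b v → IsPartSum A δ' a b v := by
    rintro δ δ' a b v hd ⟨k, τ, h0, hk, hlt, hm, hs⟩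
    exact ⟨k, τ, h0, hk, hlt, fun i hi => (hm i hi).trans hd, hs⟩
  have lim : ∀ x : ℝ, Filter.Tendsto (fun n : ℕ => x / 2 ^ n) Filter.atTop (nhds 0) := by
    intro x
    have := (tendsto_pow_atTop_nhds_zero_of_lt_one (r := (1 / 2 : ℝ)) (by norm_num)
      (by norm_num)).const_mul x
    simpa [div_eq_mul_inv] using this
  obtain ⟨w, hw⟩ : ∃ w, IsPartSum A (min δ1 δ2) 0 s w := by
    rcases hs.eq_or_lt with rfl | hs
    · exact ⟨0, IsPartSum.nil _ _ _⟩
    · obtain ⟨m, hm⟩ := ((lim (s - 0)).eventually (gt_mem_nhds hδ)).exists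
      exact ⟨_, dyadSum_isPartSum A m hs hm.le⟩
  obtain ⟨n0, hn0⟩ := Filter.eventually_atTop.1 ((lim (t - s)).eventually (gt_mem_nhds hδ))
  refine ⟨n0, fun n hn => ?_⟩
  have hv := dyadSum_isPartSum A n hst (hn0 n hn).le
  have a1 := h1 w (mono (min_le_left _ _) hw)
  have a2 := h2 _ (mono (min_le_right _ _) (hw.concat hv))
  rw [dist_eq_norm]
  calc _ = ‖(w + dyadSum A n s t - (Y t - ξ)) - (w - (Y s - ξ))‖ := by congr 1; abel
    _ ≤ ε / 3 + ε / 3 := (norm_sub_le _ _).trans (add_le_add a2 a1)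
    _ < ε := by linarith

end sewing

section estimates

variable {d e : ℕ}

/-- The vector field `Df · f`. -/
def Gf (f : Euc e → (Euc d →L[ℝ] Euc e)) (y : Euc e) : Euc d →L[ℝ] Euc d →L[ℝ] Euc e :=
  (fderiv ℝ f y).comp (f y)

/-- Local approximation (compensated increment). -/
def Aloc (f : Euc e → (Euc d →L[ℝ] Euc e)) (X : ℝ → Euc d)
    (XX : ℝ → ℝ → EuclideanSpace ℝ (Fin d × Fin d)) (Y : ℝ → Euc e) (s t : ℝ) : Euc e :=
  f (Y s) (X t - X s) + contractTensor (Gf f (Y s)) (XX s t)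

/-- Remainder of the controlled path. -/
def RR (f : Euc e → (Euc d →L[ℝ] Euc e)) (X : ℝ → Euc d) (Y : ℝ → Euc e) (s t : ℝ) : Euc e :=
  Y t - Y s - f (Y s) (X t - X s)

/-- Remainder of the controlled path `f(Y)`. -/
def PP (f : Euc e → (Euc d →L[ℝ] Euc e)) (X : ℝ → Euc d) (Y : ℝ → Euc e) (s t : ℝ) :
    Euc d →L[ℝ] Euc e :=
  f (Y t) - f (Y s) - Gf f (Y s) (X t - X s)

/-- Regularity of the coefficient, with a common constant. -/
structure GoodF (f : Euc e → (Euc d →L[ℝ] Euc e)) (N : ℝ) : Prop where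
  hN : 1 ≤ N
  hκ : (d : ℝ) * d ≤ N
  d0 : Differentiable ℝ f
  d1 : Differentiable ℝ (fderiv ℝ f)
  d2 : Differentiable ℝ (fderiv ℝ (fderiv ℝ f))
  b0 : ∀ x, ‖f x‖ ≤ N
  b1 : ∀ x, ‖fderiv ℝ f x‖ ≤ N
  b2 : ∀ x, ‖fderiv ℝ (fderiv ℝ f) x‖ ≤ N
  b3 : ∀ x, ‖fderiv ℝ (fderiv ℝ (fderiv ℝ f)) x‖ ≤ N
  g0 : Differentiable ℝ (Gf f)
  g1 : Differentiable ℝ (fderiv ℝ (Gf f))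
  c0 : ∀ x, ‖Gf f x‖ ≤ N
  c1 : ∀ x, ‖fderiv ℝ (Gf f) x‖ ≤ N
  c2 : ∀ x, ‖fderiv ℝ (fderiv ℝ (Gf f)) x‖ ≤ N

/-- Quantitative rough path on `[0,T]`. -/
structure GoodX (α T N : ℝ) (X : ℝ → Euc d)
    (XX : ℝ → ℝ → EuclideanSpace ℝ (Fin d × Fin d)) : Prop where
  hX : ∀ s t, 0 ≤ s → s ≤ t → t ≤ T → ‖X t - X s‖ ≤ N * (t - s) ^ α
  hXX : ∀ s t, 0 ≤ s → s ≤ t → t ≤ T → ‖XX s t‖ ≤ N * ((t - s) ^ α) ^ 2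
  chen : ∀ s u t, 0 ≤ s → s ≤ u → u ≤ t → t ≤ T → ∀ i j,
    XX s t (i, j) - XX s u (i, j) - XX u t (i, j) = (X u - X s) i * (X t - X u) j

variable {f : Euc e → (Euc d →L[ℝ] Euc e)} {N α T : ℝ} {X X' : ℝ → Euc d}
  {XX XX' : ℝ → ℝ → EuclideanSpace ℝ (Fin d × Fin d)} {Y Y' : ℝ → Euc e}

lemma PP_eq (s u : ℝ) : PP f X Y s u =
    (f (Y s + (Y u - Y s)) - f (Y s) - fderiv ℝ f (Y s) (Y u - Y s)) +
      fderiv ℝ f (Y s) (RR f X Y s u) := by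
  simp only [PP, RR, Gf, add_sub_cancel, map_sub, ContinuousLinearMap.comp_apply]
  abel

lemma PP_eq' (s u : ℝ) : PP f X Y s u =
    (f (Y s + f (Y s) (X u - X s)) - f (Y s) - fderiv ℝ f (Y s) (f (Y s) (X u - X s))) +
      (f (Y u) - f (Y s + f (Y s) (X u - X s))) := by
  simp only [PP, Gf, ContinuousLinearMap.comp_apply]
  abel

lemma Aloc_delta (hX : GoodX α T N X XX) {s u t : ℝ} (h0 : 0 ≤ s) (h1 : s ≤ u) (h2 : u ≤ t)
    (h3 : t ≤ T) :
    Aloc f X XX Y s t - Aloc f X XX Y s u - Aloc f X XX Y u t =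
      -(PP f X Y s u (X t - X u) + contractTensor (Gf f (Y u) - Gf f (Y s)) (XX u t)) := by
  have hc := contract_chen (Gf f (Y s)) _ _ _ _ _ (hX.chen s u t h0 h1 h2 h3)
  have hc' : contractTensor (Gf f (Y s)) (XX s t) = contractTensor (Gf f (Y s)) (XX s u) +
      contractTensor (Gf f (Y s)) (XX u t) + Gf f (Y s) (X u - X s) (X t - X u) := by
    rw [← hc]; abel
  have e : X t - X s = (X t - X u) + (X u - X s) := by abel
  simp only [Aloc, hc', contract_sub_left, PP, _root_.sub_apply]
  rw [e, map_add]
  abel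

lemma GoodF.contract (hf : GoodF f N) (B : Euc d →L[ℝ] Euc d →L[ℝ] Euc e)
    (W : EuclideanSpace ℝ (Fin d × Fin d)) {b w : ℝ} (hb : ‖B‖ ≤ b) (hw : ‖W‖ ≤ w) :
    ‖contractTensor B W‖ ≤ N * b * w := by
  have hN := hf.hN
  have h1 : 0 ≤ b := le_trans (norm_nonneg B) hb
  have := hf.hκ
  refine (contract_norm B W).trans ?_
  gcongr

lemma pw_mono (hα : 0 < α) {s t s' t' : ℝ} (h1 : s ≤ s') (h2 : s' ≤ t') (h3 : t' ≤ t) :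
    (t' - s') ^ α ≤ (t - s) ^ α :=
  Real.rpow_le_rpow (by linarith) (by linarith) hα.le

lemma pw_nonneg {s t : ℝ} (h : s ≤ t) : 0 ≤ (t - s) ^ α :=
  Real.rpow_nonneg (by linarith) _

/-- Sewing hypothesis for a single solution. -/
def Sews (α T N : ℝ) (A : ℝ → ℝ → Euc e) (Y : ℝ → Euc e) : Prop :=
  ∀ K : ℝ, 0 ≤ K → (∀ s u t, 0 ≤ s → s ≤ u → u ≤ t → t ≤ T →
      ‖A s t - A s u - A u t‖ ≤ K * ((t - s) ^ α) ^ 3) →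
    ∀ s t, 0 ≤ s → s ≤ t → t ≤ T → ‖Y t - Y s - A s t‖ ≤ N * K * ((t - s) ^ α) ^ 3

lemma Y_bound (hf : GoodF f N) (hX : GoodX α T N X XX) {s t ρ : ℝ} (h0 : 0 ≤ s) (h1 : s ≤ t)
    (h2 : t ≤ T) (hρ : ‖RR f X Y s t‖ ≤ ρ * ((t - s) ^ α) ^ 2) (hp : (t - s) ^ α ≤ 1)
    (hρ0 : 0 ≤ ρ) :
    ‖Y t - Y s‖ ≤ (N ^ 2 + ρ) * (t - s) ^ α := by
  have hN := hf.hN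
  have hp0 : 0 ≤ (t - s) ^ α := pw_nonneg h1
  have a1 : ‖f (Y s) (X t - X s)‖ ≤ N * (N * (t - s) ^ α) :=
    (f (Y s)).le_of_opNorm_le_of_le (hf.b0 _) (hX.hX s t h0 h1 h2)
  have e : Y t - Y s = f (Y s) (X t - X s) + RR f X Y s t := by simp only [RR]; abel
  rw [e]
  generalize (t - s) ^ α = p at *
  calc _ ≤ N * (N * p) + ρ * p ^ 2 := (norm_add_le _ _).trans (add_le_add a1 hρ)
    _ ≤ N * (N * p) + ρ * p := by
        have : p ^ 2 ≤ p := by nlinarith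
        gcongr
    _ = _ := by ring

lemma apriori_step (hα : 0 < α) (hf : GoodF f N) (hX : GoodX α T N X XX)
    (hS : Sews α T N (Aloc f X XX Y) Y) {a : ℝ}
    (ha : ∀ s t, 0 ≤ s → s ≤ t → t ≤ T → (t - s) ^ α ≤ a) (ha1 : 1000 * N ^ 10 * a ≤ 1)
    {ρ : ℝ} (hρ0 : 0 ≤ ρ)
    (hρ : ∀ s t, 0 ≤ s → s ≤ t → t ≤ T → ‖RR f X Y s t‖ ≤ ρ * ((t - s) ^ α) ^ 2) :
    ∀ s t, 0 ≤ s → s ≤ t → t ≤ T →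
      ‖RR f X Y s t‖ ≤ (3 / 2 * N ^ 3 + ρ / 2) * ((t - s) ^ α) ^ 2 := by
  have hN := hf.hN
  have hN0 : 0 ≤ N := by linarith
  have haN : ∀ k ≤ 10, 1000 * N ^ k * a ≤ 1 ∨ a ≤ 0 := by
    intro k hk
    by_cases h : a ≤ 0
    · exact Or.inr h
    · left
      push Not at h
      have : N ^ k ≤ N ^ 10 := pow_le_pow_right₀ hN hk
      refine le_trans ?_ ha1
      gcongr
  have ha' : a ≤ 1 := by
    rcases haN 0 (by norm_num) with h | h
    · norm_num at h; linarith
    · linarith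
  have hδ : ∀ s u t, 0 ≤ s → s ≤ u → u ≤ t → t ≤ T →
      ‖Aloc f X XX Y s t - Aloc f X XX Y s u - Aloc f X XX Y u t‖ ≤
        (4 * N ^ 6 * (1 + ρ)) * ((t - s) ^ α) ^ 3 := by
    intro s u t h0 h1 h2 h3
    have m1 : (u - s) ^ α ≤ (t - s) ^ α := pw_mono hα le_rfl h1 h2
    have m2 : (t - u) ^ α ≤ (t - s) ^ α := pw_mono hα h1 h2 le_rfl
    have n1 : 0 ≤ (u - s) ^ α := pw_nonneg h1
    have n2 : 0 ≤ (t - u) ^ α := pw_nonneg h2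
    have hR := hρ s u h0 h1 (h2.trans h3)
    have hY := Y_bound hf hX h0 h1 (h2.trans h3) hR
      ((ha s u h0 h1 (h2.trans h3)).trans ha') hρ0
    have x1 := hX.hX s u h0 h1 (h2.trans h3)
    have x2 := hX.hX u t (h0.trans h1) h2 h3
    have x3 := hX.hXX u t (h0.trans h1) h2 h3
    rw [Aloc_delta hX h0 h1 h2 h3, norm_neg]
    generalize (t - s) ^ α = p at *
    have n0 : 0 ≤ p := n1.trans m1
    have hR' : ‖RR f X Y s u‖ ≤ ρ * p ^ 2 := hR.trans (by gcongr)
    have hY' : ‖Y u - Y s‖ ≤ (N ^ 2 + ρ) * p := hY.trans (by gcongr)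
    have x1' : ‖X u - X s‖ ≤ N * p := x1.trans (by gcongr)
    have x2' : ‖X t - X u‖ ≤ N * p := x2.trans (by gcongr)
    have x3' : ‖XX u t‖ ≤ N * p ^ 2 := x3.trans (by gcongr)
    have hfx : ‖f (Y s) (X u - X s)‖ ≤ N * (N * p) :=
      (f (Y s)).le_of_opNorm_le_of_le (hf.b0 _) x1'
    have hP : ‖PP f X Y s u‖ ≤ N * (N * (N * p)) ^ 2 + N * (ρ * p ^ 2) := by
      rw [PP_eq']
      refine (norm_add_le _ _).trans (add_le_add ?_ ?_)
      · refine (taylor_le hf.d0 hf.d1 hf.b2 _ _).trans ?_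
        gcongr
      · refine (lip_of_fderiv hf.d0 hf.b1 _ _).trans ?_
        rw [← sub_sub]
        gcongr
        exact hR'
    have hG : ‖Gf f (Y u) - Gf f (Y s)‖ ≤ N * ((N ^ 2 + ρ) * p) := by
      refine (lip_of_fderiv hf.g0 hf.c1 _ _).trans ?_
      gcongr
    have t1 : ‖PP f X Y s u (X t - X u)‖ ≤
        (N * (N * (N * p)) ^ 2 + N * (ρ * p ^ 2)) * (N * p) :=
      (PP f X Y s u).le_of_opNorm_le_of_le hP x2'
    have t2 := hf.contract _ _ hG x3'
    refine ((norm_add_le _ _).trans (add_le_add t1 t2)).trans ?_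
    have k2 : N ^ 2 ≤ N ^ 6 := pow_le_pow_right₀ hN (by norm_num)
    have k3 : N ^ 3 ≤ N ^ 6 := pow_le_pow_right₀ hN (by norm_num)
    have k5 : N ^ 5 ≤ N ^ 6 := pow_le_pow_right₀ hN (by norm_num)
    calc _ = (N ^ 6 + N ^ 2 * ρ + N ^ 5 + N ^ 3 * ρ) * p ^ 3 := by ring
      _ ≤ (N ^ 6 + N ^ 6 * ρ + N ^ 6 + N ^ 6 * ρ) * p ^ 3 := by gcongr
      _ ≤ (N ^ 6 + N ^ 6 * ρ + N ^ 6 + N ^ 6 * ρ) * p ^ 3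
          + (N ^ 6 + N ^ 6 * ρ + N ^ 6 + N ^ 6 * ρ) * p ^ 3 :=
          le_add_of_nonneg_right (by positivity)
      _ = _ := by ring
  intro s t h0 h1 h2
  have hs := hS _ (by positivity) hδ s t h0 h1 h2
  have hp0 : 0 ≤ (t - s) ^ α := pw_nonneg h1
  have hpa := ha s t h0 h1 h2
  have x3 := hX.hXX s t h0 h1 h2
  have e : RR f X Y s t = (Y t - Y s - Aloc f X XX Y s t) +
      contractTensor (Gf f (Y s)) (XX s t) := by
    simp only [RR, Aloc]; abel
  rw [e]
  generalize (t - s) ^ α = p at *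
  have ha0 : 0 ≤ a := hp0.trans hpa
  have h7 : 1000 * N ^ 7 * a ≤ 1 := by
    rcases haN 7 (by norm_num) with h | h
    · exact h
    · have : a = 0 := le_antisymm h ha0
      rw [this]; norm_num
  have t2 := hf.contract _ _ (hf.c0 (Y s)) x3
  refine ((norm_add_le _ _).trans (add_le_add hs t2)).trans ?_
  have k3 : 1 ≤ N ^ 3 := one_le_pow₀ hN
  calc _ = (4 * N ^ 7 * p * (1 + ρ) + N ^ 3) * p ^ 2 := by ring
    _ ≤ (4 * N ^ 7 * a * (1 + ρ) + N ^ 3) * p ^ 2 := by gcongr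
    _ ≤ _ := by
      refine mul_le_mul_of_nonneg_right ?_ (by positivity)
      nlinarith

lemma bootstrap {P : ℝ → Prop} {c : ℝ} (hc : 0 ≤ c)
    (hcl : ∀ K, (∀ ε > 0, P (K + ε)) → P K)
    (hmono : ∀ K K', K ≤ K' → P K → P K')
    (hstep : ∀ K, 0 ≤ K → P K → P (c + K / 2)) {K : ℝ} (hK : P K) : P (2 * c) := by
  have h0 : P (|K|) := hmono _ _ (le_abs_self K) hK
  have it : ∀ n : ℕ, P (2 * c + |K| / 2 ^ n) := by
    intro n
    induction n with
    | zero => exact hmono _ _ (by simp; linarith) h0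
    | succ n ih =>
      refine hmono _ _ (le_of_eq ?_) (hstep _ (by positivity) ih)
      rw [pow_succ]; field_simp; ring
  refine hcl _ fun ε hε => ?_
  have := (tendsto_pow_atTop_nhds_zero_of_lt_one (r := (1 / 2 : ℝ)) (by norm_num)
      (by norm_num)).const_mul |K|
  rw [mul_zero] at this
  obtain ⟨n, hn⟩ := (this.eventually (gt_mem_nhds hε)).exists
  refine hmono _ _ ?_ (it n)
  have e : |K| / 2 ^ n = |K| * (1 / 2) ^ n := by rw [one_div, inv_pow, div_eq_mul_inv]
  rw [e]
  linarith

lemma le_mul_of_eps {x K q : ℝ} (h : ∀ ε > 0, x ≤ (K + ε) * q) : x ≤ K * q := by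
  refine le_of_forall_pos_le_add fun ε hε => ?_
  have := h (ε / (|q| + 1)) (by positivity)
  refine this.trans ?_
  rw [add_mul]
  gcongr
  rw [div_mul_eq_mul_div, div_le_iff₀ (by positivity)]
  gcongr
  linarith [le_abs_self q]

lemma apriori (hα : 0 < α) (hf : GoodF f N) (hX : GoodX α T N X XX)
    (hS : Sews α T N (Aloc f X XX Y) Y) {a : ℝ}
    (ha : ∀ s t, 0 ≤ s → s ≤ t → t ≤ T → (t - s) ^ α ≤ a) (ha1 : 1000 * N ^ 10 * a ≤ 1)
    {ρ : ℝ}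
    (hρ : ∀ s t, 0 ≤ s → s ≤ t → t ≤ T → ‖RR f X Y s t‖ ≤ ρ * ((t - s) ^ α) ^ 2) :
    ∀ s t, 0 ≤ s → s ≤ t → t ≤ T →
      ‖RR f X Y s t‖ ≤ (3 * N ^ 3) * ((t - s) ^ α) ^ 2 := by
  have hN := hf.hN
  have := bootstrap (P := fun ρ => ∀ s t, 0 ≤ s → s ≤ t → t ≤ T →
      ‖RR f X Y s t‖ ≤ ρ * ((t - s) ^ α) ^ 2) (c := 3 / 2 * N ^ 3) (by positivity)
    (fun K h s t h0 h1 h2 => le_mul_of_eps fun ε hε => h ε hε s t h0 h1 h2)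
    (fun K K' hK h s t h0 h1 h2 => (h s t h0 h1 h2).trans (by gcongr))
    (fun K hK h => apriori_step hα hf hX hS ha ha1 hK h) hρ
  intro s t h0 h1 h2
  refine (this s t h0 h1 h2).trans (le_of_eq (by ring))


set_option maxHeartbeats 4000000 in
lemma diff_step (hα : 0 < α) (hf : GoodF f N) (hX : GoodX α T N X XX) (hX' : GoodX α T N X' XX')
    (hS : Sews α T N (fun s t => Aloc f X XX Y s t - Aloc f X' XX' Y' s t)
      (fun t => Y t - Y' t)) {a : ℝ}
    (ha : ∀ s t, 0 ≤ s → s ≤ t → t ≤ T → (t - s) ^ α ≤ a) (ha1 : 1000 * N ^ 10 * a ≤ 1)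
    (ha0 : 0 ≤ a) {Q : ℝ} (hQ : Q = 4 * N ^ 3)
    (hR : ∀ s t, 0 ≤ s → s ≤ t → t ≤ T → ‖RR f X Y s t‖ ≤ Q * ((t - s) ^ α) ^ 2)
    (hR' : ∀ s t, 0 ≤ s → s ≤ t → t ≤ T → ‖RR f X' Y' s t‖ ≤ Q * ((t - s) ^ α) ^ 2)
    (hY : ∀ s t, 0 ≤ s → s ≤ t → t ≤ T → ‖Y t - Y s‖ ≤ Q * (t - s) ^ α)
    (hY' : ∀ s t, 0 ≤ s → s ≤ t → t ≤ T → ‖Y' t - Y' s‖ ≤ Q * (t - s) ^ α)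
    {r : ℝ} (hr : ‖Y 0 - Y' 0‖ ≤ r)
    (hΔX : ∀ s t, 0 ≤ s → s ≤ t → t ≤ T →
      ‖(X t - X s) - (X' t - X' s)‖ ≤ r * (t - s) ^ α)
    (hΔXX : ∀ s t, 0 ≤ s → s ≤ t → t ≤ T → ‖XX s t - XX' s t‖ ≤ r * ((t - s) ^ α) ^ 2)
    {w : ℝ} (hw0 : 0 ≤ w)
    (hw : ∀ s t, 0 ≤ s → s ≤ t → t ≤ T →
      ‖(Y t - Y s) - (Y' t - Y' s)‖ ≤ w * (t - s) ^ α ∧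
      ‖RR f X Y s t - RR f X' Y' s t‖ ≤ w * ((t - s) ^ α) ^ 2) :
    ∀ s t, 0 ≤ s → s ≤ t → t ≤ T →
      ‖(Y t - Y s) - (Y' t - Y' s)‖ ≤ (3 * N ^ 3 * r + w / 2) * (t - s) ^ α ∧
      ‖RR f X Y s t - RR f X' Y' s t‖ ≤ (3 * N ^ 3 * r + w / 2) * ((t - s) ^ α) ^ 2 := by
  have hN := hf.hN
  have hN0 : 0 ≤ N := by linarith
  have hr0 : 0 ≤ r := (norm_nonneg _).trans hr
  have hQ1 : 1 ≤ Q := by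
    have : 1 ≤ N ^ 3 := one_le_pow₀ hN
    rw [hQ]; linarith
  have hQ0 : 0 ≤ Q := by linarith
  have haN : ∀ k ≤ 10, 1000 * (N ^ k * a) ≤ 1 := by
    intro k hk
    have : N ^ k ≤ N ^ 10 := pow_le_pow_right₀ hN hk
    refine le_trans ?_ ha1
    rw [← mul_assoc]
    gcongr
  have ha' : a ≤ 1 := by
    have := haN 0 (by norm_num)
    norm_num at this; linarith
  -- sup bound
  obtain ⟨z, hz⟩ : ∃ z, z = r + w * a := ⟨_, rfl⟩
  have hz0 : 0 ≤ z := by rw [hz]; positivity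
  have hZ : ∀ t, 0 ≤ t → t ≤ T → ‖Y t - Y' t‖ ≤ z := by
    intro t h0 h1
    have h := (hw 0 t le_rfl h0 h1).1
    have h' := ha 0 t le_rfl h0 h1
    calc ‖Y t - Y' t‖ = ‖(Y 0 - Y' 0) + ((Y t - Y 0) - (Y' t - Y' 0))‖ := by congr 1; abel
      _ ≤ r + w * a := (norm_add_le _ _).trans (add_le_add hr (h.trans (by gcongr)))
      _ = z := hz.symm
  obtain ⟨m, hm⟩ : ∃ m, m = z + w + r := ⟨_, rfl⟩
  have hm0 : 0 ≤ m := by rw [hm]; positivity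
  have hzm : z ≤ m := by rw [hm]; linarith
  have hwm : w ≤ m := by rw [hm]; linarith
  have hrm : r ≤ m := by rw [hm]; linarith
  have hδ : ∀ s u t, 0 ≤ s → s ≤ u → u ≤ t → t ≤ T →
      ‖(Aloc f X XX Y s t - Aloc f X' XX' Y' s t) - (Aloc f X XX Y s u - Aloc f X' XX' Y' s u)
        - (Aloc f X XX Y u t - Aloc f X' XX' Y' u t)‖ ≤
        (10 * N ^ 3 * Q ^ 2 * m) * ((t - s) ^ α) ^ 3 := by
    intro s u t h0 h1 h2 h3
    have h4 := h2.trans h3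
    have h5 := h0.trans h1
    have m1 : (u - s) ^ α ≤ (t - s) ^ α := pw_mono hα le_rfl h1 h2
    have m2 : (t - u) ^ α ≤ (t - s) ^ α := pw_mono hα h1 h2 le_rfl
    have n1 : 0 ≤ (u - s) ^ α := pw_nonneg h1
    have n2 : 0 ≤ (t - u) ^ α := pw_nonneg h2
    have e : (Aloc f X XX Y s t - Aloc f X' XX' Y' s t)
        - (Aloc f X XX Y s u - Aloc f X' XX' Y' s u)
        - (Aloc f X XX Y u t - Aloc f X' XX' Y' u t) =
        -((PP f X Y s u (X t - X u) - PP f X' Y' s u (X' t - X' u)) +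
          (contractTensor ((Gf f (Y u) - Gf f (Y s)) - (Gf f (Y' u) - Gf f (Y' s))) (XX u t) +
          contractTensor (Gf f (Y' u) - Gf f (Y' s)) (XX u t - XX' u t))) := by
      have e1 := Aloc_delta (f := f) (Y := Y) hX h0 h1 h2 h3
      have e2 := Aloc_delta (f := f) (Y := Y') hX' h0 h1 h2 h3
      calc _ = (Aloc f X XX Y s t - Aloc f X XX Y s u - Aloc f X XX Y u t) -
            (Aloc f X' XX' Y' s t - Aloc f X' XX' Y' s u - Aloc f X' XX' Y' u t) := by abel
        _ = _ := by
          rw [e1, e2, contract_sub_right, contract_sub_left (Gf f (Y u) - Gf f (Y s))]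
          abel
    rw [e, norm_neg]
    have q1 := hR s u h0 h1 h4
    have q1' := hR' s u h0 h1 h4
    have q2 := hY s u h0 h1 h4
    have q2' := hY' s u h0 h1 h4
    have q3 := hX.hX u t h5 h2 h3
    have q4 := hX.hXX u t h5 h2 h3
    have q5 := hΔX u t h5 h2 h3
    have q6 := hΔXX u t h5 h2 h3
    obtain ⟨q7, q8⟩ := hw s u h0 h1 h4
    have q9 := hZ s h0 (h1.trans h4)
    generalize (t - s) ^ α = p at *
    have n0 : 0 ≤ p := n1.trans m1
    replace q1 : ‖RR f X Y s u‖ ≤ Q * p ^ 2 := q1.trans (by gcongr)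
    replace q1' : ‖RR f X' Y' s u‖ ≤ Q * p ^ 2 := q1'.trans (by gcongr)
    replace q2 : ‖Y u - Y s‖ ≤ Q * p := q2.trans (by gcongr)
    replace q2' : ‖Y' u - Y' s‖ ≤ Q * p := q2'.trans (by gcongr)
    replace q3 : ‖X t - X u‖ ≤ N * p := q3.trans (by gcongr)
    replace q4 : ‖XX u t‖ ≤ N * p ^ 2 := q4.trans (by gcongr)
    replace q5 : ‖(X t - X u) - (X' t - X' u)‖ ≤ m * p := q5.trans (by gcongr)
    replace q6 : ‖XX u t - XX' u t‖ ≤ m * p ^ 2 := q6.trans (by gcongr)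
    replace q7 : ‖(Y u - Y s) - (Y' u - Y' s)‖ ≤ m * p := q7.trans (by gcongr)
    replace q8 : ‖RR f X Y s u - RR f X' Y' s u‖ ≤ m * p ^ 2 := q8.trans (by gcongr)
    replace q9 : ‖Y s - Y' s‖ ≤ m := q9.trans hzm
    have hP' : ‖PP f X' Y' s u‖ ≤ N * (Q * p) ^ 2 + N * (Q * p ^ 2) := by
      rw [PP_eq]
      refine (norm_add_le _ _).trans (add_le_add ?_ ?_)
      · refine (taylor_le hf.d0 hf.d1 hf.b2 _ _).trans ?_
        gcongr
      · exact (fderiv ℝ f (Y' s)).le_of_opNorm_le_of_le (hf.b1 _) q1'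
    have hPP : ‖PP f X Y s u - PP f X' Y' s u‖ ≤
        (N * (Q * p) ^ 2 * m + N * (Q * p + Q * p) * (m * p)) +
          ((N * m) * (Q * p ^ 2) + N * (m * p ^ 2)) := by
      rw [PP_eq, PP_eq, add_sub_add_comm]
      refine (norm_add_le _ _).trans (add_le_add ?_ ?_)
      · refine (taylor_diff hf.d0 hf.d1 hf.d2 hf.b2 hf.b3 _ _ _ _).trans ?_
        gcongr
      · refine (clm_diff_le _ _ _ _).trans ?_
        have l1 : ‖fderiv ℝ f (Y s) - fderiv ℝ f (Y' s)‖ ≤ N * m :=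
          (lip_of_fderiv hf.d1 hf.b2 _ _).trans (by gcongr)
        have l2 := hf.b1 (Y' s)
        gcongr
    have hG' : ‖Gf f (Y' u) - Gf f (Y' s)‖ ≤ N * (Q * p) :=
      (lip_of_fderiv hf.g0 hf.c1 _ _).trans (by gcongr)
    have hGG : ‖(Gf f (Y u) - Gf f (Y s)) - (Gf f (Y' u) - Gf f (Y' s))‖ ≤
        N * (Q * p) * m + N * (m * p) := by
      have := four_point hf.g0 hf.g1 hf.c1 hf.c2 (Y s) (Y' s) (Y u - Y s) (Y' u - Y' s)
      rw [add_sub_cancel, add_sub_cancel] at this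
      refine this.trans ?_
      gcongr
    have t1 : ‖PP f X Y s u (X t - X u) - PP f X' Y' s u (X' t - X' u)‖ ≤
        ((N * (Q * p) ^ 2 * m + N * (Q * p + Q * p) * (m * p)) +
          ((N * m) * (Q * p ^ 2) + N * (m * p ^ 2))) * (N * p) +
        (N * (Q * p) ^ 2 + N * (Q * p ^ 2)) * (m * p) := by
      refine (clm_diff_le _ _ _ _).trans ?_
      gcongr
    have t2 := hf.contract _ _ hGG q4
    have t3 := hf.contract _ _ hG' q6
    refine ((norm_add_le _ _).trans (add_le_add t1
      ((norm_add_le _ _).trans (add_le_add t2 t3)))).trans ?_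
    have kQ : Q ≤ Q ^ 2 := by nlinarith
    have kQ1 : 1 ≤ Q ^ 2 := by nlinarith
    have k1 : N ≤ N ^ 3 := le_self_pow₀ hN (by norm_num)
    have k2 : N ^ 2 ≤ N ^ 3 := pow_le_pow_right₀ hN (by norm_num)
    calc _ = (N ^ 2 * Q ^ 2 + 2 * (N ^ 2 * Q) + N ^ 2 * Q + N ^ 2 * 1 + N * Q ^ 2 + N * Q
          + N ^ 3 * Q + N ^ 3 * 1 + N ^ 2 * Q) * (m * p ^ 3) := by ring
      _ ≤ (N ^ 3 * Q ^ 2 + 2 * (N ^ 3 * Q ^ 2) + N ^ 3 * Q ^ 2 + N ^ 3 * Q ^ 2 + N ^ 3 * Q ^ 2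
          + N ^ 3 * Q ^ 2 + N ^ 3 * Q ^ 2 + N ^ 3 * Q ^ 2 + N ^ 3 * Q ^ 2) * (m * p ^ 3) := by
          gcongr
      _ = _ := by ring
  intro s t h0 h1 h2
  have hs := hS _ (by positivity) hδ s t h0 h1 h2
  have hp0 : 0 ≤ (t - s) ^ α := pw_nonneg h1
  have hpa := ha s t h0 h1 h2
  have x2 := hX.hX s t h0 h1 h2
  have x3 := hX.hXX s t h0 h1 h2
  have x4 := hΔX s t h0 h1 h2
  have x5 := hΔXX s t h0 h1 h2
  have x6 := hZ s h0 (h1.trans h2)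
  obtain ⟨-, x7⟩ := hw s t h0 h1 h2
  generalize (t - s) ^ α = p at *
  have kk : 0 ≤ 1 - N ^ 3 * a * 1000 := by have := haN 3 (by norm_num); linarith
  have k1 : 1 ≤ N ^ 3 := one_le_pow₀ hN
  have kN : N ≤ N ^ 3 := le_self_pow₀ hN (by norm_num)
  have kN2 : N ^ 2 ≤ N ^ 3 := pow_le_pow_right₀ hN (by norm_num)
  constructor
  · have e : (Y t - Y s) - (Y' t - Y' s) =
        (f (Y s) (X t - X s) - f (Y' s) (X' t - X' s)) +
          (RR f X Y s t - RR f X' Y' s t) := by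
      simp only [RR]; abel
    rw [e]
    have l1 : ‖f (Y s) - f (Y' s)‖ ≤ N * z := (lip_of_fderiv hf.d0 hf.b1 _ _).trans (by gcongr)
    have l2 := hf.b0 (Y' s)
    have t1 : ‖f (Y s) (X t - X s) - f (Y' s) (X' t - X' s)‖ ≤ (N * z) * (N * p) + N * (r * p) := by
      refine (clm_diff_le _ _ _ _).trans ?_
      gcongr
    refine ((norm_add_le _ _).trans (add_le_add t1 x7)).trans ?_
    calc _ = (N ^ 2 * z + N * r + w * p) * p := by ring
      _ ≤ (N ^ 3 * z + N ^ 3 * r + w * a) * p := by gcongr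
      _ ≤ _ := by
        refine mul_le_mul_of_nonneg_right ?_ hp0
        rw [hz]
        have := haN 0 (by norm_num)
        have := mul_nonneg kk hw0
        nlinarith [mul_nonneg (sub_nonneg.2 k1) hr0]
  · have e : RR f X Y s t - RR f X' Y' s t =
        ((Y t - Y' t) - (Y s - Y' s) - (Aloc f X XX Y s t - Aloc f X' XX' Y' s t)) +
        (contractTensor (Gf f (Y s) - Gf f (Y' s)) (XX s t) +
          contractTensor (Gf f (Y' s)) (XX s t - XX' s t)) := by
      simp only [RR, Aloc, contract_sub_left, contract_sub_right]; abel
    rw [e]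
    have l1 : ‖Gf f (Y s) - Gf f (Y' s)‖ ≤ N * z :=
      (lip_of_fderiv hf.g0 hf.c1 _ _).trans (by gcongr)
    have t1 := hf.contract _ _ l1 x3
    have t2 := hf.contract _ _ (hf.c0 (Y' s)) x5
    refine ((norm_add_le _ _).trans (add_le_add hs
      ((norm_add_le _ _).trans (add_le_add t1 t2)))).trans ?_
    calc _ = (N ^ 3 * z + N ^ 2 * r + 160 * (N ^ 10 * p) * m) * p ^ 2 := by rw [hQ]; ring
      _ ≤ (N ^ 3 * z + N ^ 3 * r + 160 * (N ^ 10 * a) * m) * p ^ 2 := by gcongr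
      _ ≤ _ := by
        refine mul_le_mul_of_nonneg_right ?_ (by positivity)
        have g10 := haN 10 (by norm_num)
        have : 160 * (N ^ 10 * a) * m ≤ 16 / 100 * m := by
          refine mul_le_mul_of_nonneg_right ?_ hm0
          linarith
        have g1 : w * a ≤ w := mul_le_of_le_one_right hw0 ha'
        have g2 : m ≤ 2 * r + 2 * w := by rw [hm, hz]; linarith
        have g3 := mul_nonneg kk hw0
        have g4 : r ≤ N ^ 3 * r := le_mul_of_one_le_left hr0 k1
        have g5 : N ^ 3 * z = N ^ 3 * r + N ^ 3 * a * w := by rw [hz]; ring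
        nlinarith



lemma GoodF.mono (hf : GoodF f N) {N' : ℝ} (h : N ≤ N') : GoodF f N' where
  hN := hf.hN.trans h
  hκ := hf.hκ.trans h
  d0 := hf.d0
  d1 := hf.d1
  d2 := hf.d2
  b0 := fun x => (hf.b0 x).trans h
  b1 := fun x => (hf.b1 x).trans h
  b2 := fun x => (hf.b2 x).trans h
  b3 := fun x => (hf.b3 x).trans h
  g0 := hf.g0
  g1 := hf.g1
  c0 := fun x => (hf.c0 x).trans h
  c1 := fun x => (hf.c1 x).trans h
  c2 := fun x => (hf.c2 x).trans h

set_option maxHeartbeats 4000000 in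
lemma exists_goodF (f : Euc e → (Euc d →L[ℝ] Euc e))
    (hf_smooth : ContDiff ℝ 3 f)
    (hf_bdd : ∀ i : ℕ, i ≤ 3 → ∃ C : ℝ, ∀ x, ‖iteratedFDeriv ℝ i f x‖ ≤ C) :
    ∃ N, GoodF f N := by
  obtain ⟨C0, h0⟩ := hf_bdd 0 (by norm_num)
  obtain ⟨C1, h1⟩ := hf_bdd 1 (by norm_num)
  obtain ⟨C2, h2⟩ := hf_bdd 2 (by norm_num)
  obtain ⟨C3, h3⟩ := hf_bdd 3 (by norm_num)
  have p0 : 0 ≤ C0 := (norm_nonneg _).trans (h0 0)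
  have p1 : 0 ≤ C1 := (norm_nonneg _).trans (h1 0)
  have p2 : 0 ≤ C2 := (norm_nonneg _).trans (h2 0)
  have p3 : 0 ≤ C3 := (norm_nonneg _).trans (h3 0)
  obtain ⟨C, hC⟩ : ∃ C, C = C0 + C1 + C2 + C3 := ⟨_, rfl⟩
  have hC0 : 0 ≤ C := by rw [hC]; positivity
  have hb : ∀ i ≤ 3, ∀ x, ‖iteratedFDeriv ℝ i f x‖ ≤ C := by
    intro i hi x
    interval_cases i
    · linarith [h0 x]
    · linarith [h1 x]
    · linarith [h2 x]
    · linarith [h3 x]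
  have hb' : ∀ i ≤ 2, ∀ x, ‖iteratedFDeriv ℝ i (fderiv ℝ f) x‖ ≤ C := by
    intro i hi x
    rw [norm_iteratedFDeriv_fderiv]
    exact hb (i + 1) (by omega) x
  have s1 : ContDiff ℝ 2 (fderiv ℝ f) := hf_smooth.fderiv_right (by norm_num)
  have s2 : ContDiff ℝ 1 (fderiv ℝ (fderiv ℝ f)) := s1.fderiv_right (by norm_num)
  have s0 : ContDiff ℝ 2 f := hf_smooth.of_le (by norm_num)
  have sG : ContDiff ℝ 2 (Gf f) := s1.clm_comp s0
  have sG1 : ContDiff ℝ 1 (fderiv ℝ (Gf f)) := sG.fderiv_right (by norm_num)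
  let B := ContinuousLinearMap.compL ℝ (Euc d) (Euc e) (Euc d →L[ℝ] Euc e)
  have hG : ∀ i ≤ 2, ∀ x, ‖iteratedFDeriv ℝ i (Gf f) x‖ ≤ ‖B‖ * (4 * C * C) := by
    intro n hn x
    have := B.norm_iteratedFDeriv_le_of_bilinear s1 s0 x (n := n) (by exact_mod_cast hn)
    refine le_trans this ?_
    refine mul_le_mul_of_nonneg_left ?_ (norm_nonneg B)
    calc _ ≤ ∑ i ∈ Finset.range (n + 1), (n.choose i : ℝ) * C * C := by
          refine Finset.sum_le_sum fun i hi => ?_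
          have hi' := Finset.mem_range.mp hi
          have a1 := hb' i (by omega) x
          have a2 := hb (n - i) (by omega) x
          gcongr
      _ = (2 : ℝ) ^ n * C * C := by
          rw [← Finset.sum_mul, ← Finset.sum_mul]
          congr 2
          exact_mod_cast Nat.sum_range_choose n
      _ ≤ 2 ^ 2 * C * C := by gcongr; norm_num
      _ = _ := by norm_num
  have hB : 0 ≤ ‖B‖ := norm_nonneg B
  obtain ⟨f0, f1, f2⟩ := fderiv_bounds_of_iter (fun i hi => hb i (by omega))
  obtain ⟨-, -, f3⟩ := fderiv_bounds_of_iter hb'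
  obtain ⟨k0, k1, k2⟩ := fderiv_bounds_of_iter hG
  have hBC : 0 ≤ ‖B‖ * (4 * C * C) := by positivity
  have hdd : (0 : ℝ) ≤ (d : ℝ) * d := by positivity
  refine ⟨1 + d * d + C + ‖B‖ * (4 * C * C), ?_⟩
  generalize ‖B‖ * (4 * C * C) = D at *
  exact {
    hN := by linarith
    hκ := by linarith
    d0 := hf_smooth.differentiable (by norm_num)
    d1 := s1.differentiable (by norm_num)
    d2 := s2.differentiable (by norm_num)
    b0 := fun x => by linarith [f0 x]
    b1 := fun x => by linarith [f1 x]
    b2 := fun x => by linarith [f2 x]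
    b3 := fun x => by linarith [f3 x]
    g0 := sG.differentiable (by norm_num)
    g1 := sG1.differentiable (by norm_num)
    c0 := fun x => by linarith [k0 x]
    c1 := fun x => by linarith [k1 x]
    c2 := fun x => by linarith [k2 x] }

lemma sews_of_tendsto {A : ℝ → ℝ → Euc e} {c : ℝ} (hα : 0 < α) (hc0 : 0 ≤ c)
    (hc : 2 * c * ((1 / 2 : ℝ) ^ α) ^ 3 + 1 ≤ c) (hcN : c ≤ N)
    (h : ∀ s t, 0 ≤ s → s < t → t ≤ T →
      Filter.Tendsto (fun n => dyadSum A n s t) Filter.atTop (nhds (Y t - Y s))) :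
    Sews α T N A Y := by
  intro K hK hA s t h0 h1 h2
  rcases h1.eq_or_lt with rfl | h1
  · have := hA s s s h0 le_rfl le_rfl h2
    simpa [hα.ne'] using this
  · have lim := ((h s t h0 h1 h2).sub_const (A s t)).norm
    have b := le_of_tendsto lim (Filter.Eventually.of_forall fun n =>
      dyadSum_bound hK hc0 hc hA n s t h0 h1.le h2)
    refine b.trans ?_
    have := pw_nonneg (α := α) h1.le
    gcongr

lemma holder_le {V : Type*} [NormedAddCommGroup V] {Z : ℝ → V} (hα : 0 < α)
    (hb : BddAbove (holderRatios α T Z)) {s t : ℝ} (h0 : 0 ≤ s) (h1 : s ≤ t) (h2 : t ≤ T) :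
    ‖Z t - Z s‖ ≤ sSup (holderRatios α T Z) * (t - s) ^ α := by
  rcases h1.eq_or_lt with rfl | h1
  · simp [hα.ne']
  · rw [← div_le_iff₀ (Real.rpow_pos_of_pos (by linarith) _)]
    exact le_csSup hb ⟨s, t, h0, h1, h2, rfl⟩

lemma holder2_le {V : Type*} [NormedAddCommGroup V] {Z : ℝ → ℝ → V}
    (hb : BddAbove (holderRatios2 α T Z)) (hz : ∀ s, 0 ≤ s → s ≤ T → Z s s = 0)
    (hα : 0 < α) {s t : ℝ} (h0 : 0 ≤ s) (h1 : s ≤ t)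
    (h2 : t ≤ T) :
    ‖Z s t‖ ≤ sSup (holderRatios2 α T Z) * ((t - s) ^ α) ^ 2 := by
  rcases h1.eq_or_lt with rfl | h1
  · simp [hα.ne', hz s h0 h2]
  · have hp : 0 < (t - s) ^ α := Real.rpow_pos_of_pos (by linarith) _
    rw [← div_le_iff₀ (by positivity)]
    refine le_csSup hb ⟨s, t, h0, by linarith, by linarith, h2, h1.ne, ?_⟩
    rw [abs_of_pos (by linarith), mul_comm 2 α, Real.rpow_mul (by linarith)]
    norm_num

lemma holder_nonneg {V : Type*} [NormedAddCommGroup V] {Z : ℝ → V} :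
    0 ≤ sSup (holderRatios α T Z) := by
  refine Real.sSup_nonneg ?_
  rintro _ ⟨s, t, h0, h1, h2, rfl⟩
  have := pw_nonneg (α := α) h1.le
  positivity

lemma holder2_nonneg {V : Type*} [NormedAddCommGroup V] {Z : ℝ → ℝ → V} :
    0 ≤ sSup (holderRatios2 α T Z) := by
  refine Real.sSup_nonneg ?_
  rintro _ ⟨s, t, h0, h1, h2, h3, h4, rfl⟩
  positivity

lemma holder_sub_bdd {V : Type*} [NormedAddCommGroup V] {Z Z' : ℝ → V}
    (hb : BddAbove (holderRatios α T Z)) (hb' : BddAbove (holderRatios α T Z')) :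
    BddAbove (holderRatios α T (fun u => Z u - Z' u)) := by
  obtain ⟨K, hK⟩ := hb
  obtain ⟨K', hK'⟩ := hb'
  refine ⟨K + K', ?_⟩
  rintro _ ⟨s, t, h0, h1, h2, rfl⟩
  have a1 := hK ⟨s, t, h0, h1, h2, rfl⟩
  have a2 := hK' ⟨s, t, h0, h1, h2, rfl⟩
  have hp := pw_nonneg (α := α) h1.le
  refine le_trans ?_ (add_le_add a1 a2)
  rw [← add_div]
  gcongr
  calc ‖(Z t - Z' t) - (Z s - Z' s)‖ = ‖(Z t - Z s) - (Z' t - Z' s)‖ := by congr 1; abel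
    _ ≤ _ := norm_sub_le _ _

lemma holder2_sub_bdd {V : Type*} [NormedAddCommGroup V] {Z Z' : ℝ → ℝ → V}
    (hb : BddAbove (holderRatios2 α T Z)) (hb' : BddAbove (holderRatios2 α T Z')) :
    BddAbove (holderRatios2 α T (fun u v => Z u v - Z' u v)) := by
  obtain ⟨K, hK⟩ := hb
  obtain ⟨K', hK'⟩ := hb'
  refine ⟨K + K', ?_⟩
  rintro _ ⟨s, t, h0, h1, h2, h3, h4, rfl⟩
  have a1 := hK ⟨s, t, h0, h1, h2, h3, h4, rfl⟩
  have a2 := hK' ⟨s, t, h0, h1, h2, h3, h4, rfl⟩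
  refine le_trans ?_ (add_le_add a1 a2)
  rw [← add_div]
  gcongr
  exact norm_sub_le _ _

lemma IsRoughPath.diag (h : IsRoughPath α X XX) (s : ℝ) (h0 : 0 ≤ s) (h1 : s ≤ 1) :
    XX s s = 0 := by
  ext ⟨i, j⟩
  have := h.2.1 s s s h0 le_rfl le_rfl h1 i j
  simpa using this

lemma IsRoughPath.good (h : IsRoughPath α X XX) (hα : 0 < α) {M : ℝ} (hT : T ≤ 1)
    (hM : sSup (holderRatios α 1 X) + Real.sqrt (sSup (holderRatios2 α 1 XX)) ≤ M)
    (hN1 : M ≤ N) (hN2 : M ^ 2 ≤ N) : GoodX α T N X XX := by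
  have k1 : 0 ≤ sSup (holderRatios α 1 X) := holder_nonneg
  have k2 : 0 ≤ sSup (holderRatios2 α 1 XX) := holder2_nonneg
  have k3 := Real.sqrt_nonneg (sSup (holderRatios2 α 1 XX))
  have k4 : sSup (holderRatios2 α 1 XX) ≤ M ^ 2 := by
    rw [← Real.sq_sqrt k2]
    gcongr
    linarith
  refine ⟨fun s t h0 h1 h2 => ?_, fun s t h0 h1 h2 => ?_, fun s u t h0 h1 h2 h3 i j => ?_⟩
  · refine (holder_le hα h.2.2.1 h0 h1 (h2.trans hT)).trans ?_
    have := pw_nonneg (α := α) h1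
    gcongr
    linarith
  · refine (holder2_le h.2.2.2 h.diag hα h0 h1 (h2.trans hT)).trans ?_
    have := pw_nonneg (α := α) h1
    gcongr
    linarith
  · simpa using h.2.1 s u t h0 h1 h2 (h3.trans hT) i j

lemma SolvesRDE.tendsto {ξ : Euc e} (h : SolvesRDE α T X XX f ξ Y) :
    ∀ s t, 0 ≤ s → s < t → t ≤ T → Filter.Tendsto (fun n => dyadSum (Aloc f X XX Y) n s t)
      Filter.atTop (nhds (Y t - Y s)) := by
  intro s t h0 h1 h2
  refine dyadSum_tendsto (T := T) (ξ := ξ) ?_ h0 h1 h2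
  intro t ht ε hε
  obtain ⟨δ, hδ, hh⟩ := h.2.2.2 t ht ε hε
  refine ⟨δ, hδ, ?_⟩
  rintro v ⟨k, τ, a0, a1, a2, a3, rfl⟩
  exact hh k τ a0 a1 a2 a3

lemma SolvesRDE.start_eq {ξ : Euc e} (h : SolvesRDE α T X XX f ξ Y) (hT : 0 ≤ T) : Y 0 = ξ := by
  rw [← sub_eq_zero, ← norm_le_zero_iff]
  refine le_of_forall_pos_le_add fun ε hε => ?_
  obtain ⟨δ, hδ, hh⟩ := h.2.2.2 0 ⟨le_rfl, hT⟩ ε hε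
  have := hh 0 (fun _ => 0) rfl rfl (by simp) (by simp)
  simpa [norm_sub_rev] using this

lemma SolvesRDE.rem {ξ : Euc e} (h : SolvesRDE α T X XX f ξ Y) (hα : 0 < α) :
    ∃ ρ, 0 ≤ ρ ∧ ∀ s t, 0 ≤ s → s ≤ t → t ≤ T →
      ‖RR f X Y s t‖ ≤ ρ * ((t - s) ^ α) ^ 2 :=
  ⟨_, holder2_nonneg, fun _ _ h0 h1 h2 =>
    holder2_le (Z := fun s t => RR f X Y s t) h.2.2.1 (by simp [RR]) hα h0 h1 h2⟩

end estimates

end helpers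

/-- Local Lipschitz continuity of the Itô–Lyons map: for `α ∈ (1/3,1/2]`,
`M > 0` and `f ∈ C³_b`, there exist `T₀ > 0` and a constant `C` (depending only on
`M`, `α`, `f`) such that for any two `α`-Hölder rough paths `𝐗, 𝐗̃` with
`‖𝐗‖_{𝒞^α}, ‖𝐗̃‖_{𝒞^α} ≤ M` and any solutions `Y, Ỹ` on `[0,T₀]` of
`dY = f(Y)d𝐗, Y_0 = ξ` and `dỸ = f(Ỹ)d𝐗̃, Ỹ_0 = ξ̃`, one has
`‖Y − Ỹ‖_α ≤ C (|ξ − ξ̃| + ϱ_α(𝐗,𝐗̃))`. -/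
theorem ito_lyons_local_lipschitz (α : ℝ) (hα1 : 1/3 < α) (hα2 : α ≤ 1/2)
    (M : ℝ) (hM : 0 < M) (d e : ℕ) (f : Euc e → (Euc d →L[ℝ] Euc e))
    (hf_smooth : ContDiff ℝ 3 f)
    (hf_bdd : ∀ i : ℕ, i ≤ 3 → ∃ C : ℝ, ∀ x, ‖iteratedFDeriv ℝ i f x‖ ≤ C) :
    ∃ T₀ : ℝ, 0 < T₀ ∧ T₀ ≤ 1 ∧ ∃ C : ℝ,
      ∀ (X X' : ℝ → Euc d) (XX XX' : ℝ → ℝ → EuclideanSpace ℝ (Fin d × Fin d)),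
        IsRoughPath α X XX → IsRoughPath α X' XX' →
        sSup (holderRatios α 1 X) + Real.sqrt (sSup (holderRatios2 α 1 XX)) ≤ M →
        sSup (holderRatios α 1 X') + Real.sqrt (sSup (holderRatios2 α 1 XX')) ≤ M →
        ∀ (ξ ξ' : Euc e) (Y Y' : ℝ → Euc e),
          SolvesRDE α T₀ X XX f ξ Y → SolvesRDE α T₀ X' XX' f ξ' Y' →
          ∀ s t : ℝ, 0 ≤ s → s < t → t ≤ T₀ →
            ‖(Y t - Y' t) - (Y s - Y' s)‖ ≤
              C * (‖ξ - ξ'‖ +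
                  (sSup (holderRatios α 1 (fun u => X u - X' u)) +
                    sSup (holderRatios2 α 1 (fun u v => XX u v - XX' u v)))) *
                (t - s) ^ α := by
  have hα : 0 < α := by linarith
  obtain ⟨N0, hN0⟩ := exists_goodF f hf_smooth hf_bdd
  -- sewing constant
  obtain ⟨θ, hθ⟩ : ∃ θ : ℝ, θ = ((1 / 2 : ℝ) ^ α) ^ 3 := ⟨_, rfl⟩
  have hθ1 : θ < 1 / 2 := by
    rw [hθ, ← Real.rpow_natCast, ← Real.rpow_mul (by norm_num)]
    calc _ < (1 / 2 : ℝ) ^ (1 : ℝ) :=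
          Real.rpow_lt_rpow_of_exponent_gt (by norm_num) (by norm_num) (by push_cast; linarith)
      _ = _ := by simp
  obtain ⟨c, hcdef⟩ : ∃ c : ℝ, c = 1 / (1 - 2 * θ) := ⟨_, rfl⟩
  have hpos : 0 < 1 - 2 * θ := by linarith
  have hc0 : 0 ≤ c := by rw [hcdef]; positivity
  have hc : 2 * c * ((1 / 2 : ℝ) ^ α) ^ 3 + 1 ≤ c := by
    rw [← hθ]
    have : c * (1 - 2 * θ) = 1 := by rw [hcdef]; field_simp
    linarith
  have hN01 := hN0.hN
  obtain ⟨N, hN⟩ : ∃ N : ℝ, N = N0 + c + M + M ^ 2 := ⟨_, rfl⟩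
  have hM2 : 0 ≤ M ^ 2 := by positivity
  have hcN : c ≤ N := by linarith
  have hMN : M ≤ N := by linarith
  have hM2N : M ^ 2 ≤ N := by linarith
  have hf : GoodF f N := hN0.mono (by linarith)
  have hN1 := hf.hN
  obtain ⟨a, ha⟩ : ∃ a : ℝ, a = 1 / (1000 * N ^ 10) := ⟨_, rfl⟩
  have hN10 : 1 ≤ N ^ 10 := one_le_pow₀ hN1
  have ha0 : 0 < a := by rw [ha]; positivity
  have ha1 : 1000 * N ^ 10 * a ≤ 1 := by rw [ha]; field_simp; exact le_rfl
  have hale : a ≤ 1 := by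
    rw [ha, div_le_one (by positivity)]
    linarith
  obtain ⟨T, hT⟩ : ∃ T : ℝ, T = a ^ (1 / α) := ⟨_, rfl⟩
  have hT0 : 0 < T := by rw [hT]; positivity
  have hT1 : T ≤ 1 := by rw [hT]; exact Real.rpow_le_one ha0.le hale (by positivity)
  have hTa : T ^ α = a := by
    rw [hT, ← Real.rpow_mul ha0.le, one_div_mul_cancel hα.ne', Real.rpow_one]
  have hpa : ∀ s t, 0 ≤ s → s ≤ t → t ≤ T → (t - s) ^ α ≤ a := by
    intro s t h0 h1 h2
    rw [← hTa]
    exact Real.rpow_le_rpow (by linarith) (by linarith) hα.le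
  refine ⟨T, hT0, hT1, 6 * N ^ 3, ?_⟩
  intro X X' XX XX' hX hX' hXM hXM' ξ ξ' Y Y' hY hY' s t hs hst ht
  have gX : GoodX α T N X XX := hX.good hα hT1 hXM hMN hM2N
  have gX' : GoodX α T N X' XX' := hX'.good hα hT1 hXM' hMN hM2N
  have S := sews_of_tendsto hα hc0 hc hcN hY.tendsto
  have S' := sews_of_tendsto hα hc0 hc hcN hY'.tendsto
  have SD : Sews α T N (fun s t => Aloc f X XX Y s t - Aloc f X' XX' Y' s t)
      (fun t => Y t - Y' t) := by
    refine sews_of_tendsto hα hc0 hc hcN fun s t h0 h1 h2 => ?_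
    have := (hY.tendsto s t h0 h1 h2).sub (hY'.tendsto s t h0 h1 h2)
    simp only [dyadSum_sub]
    convert this using 2
    abel
  obtain ⟨ρ, hρ0, hρ⟩ := hY.rem hα
  obtain ⟨ρ', hρ0', hρ'⟩ := hY'.rem hα
  have R1 := apriori hα hf gX S hpa ha1 hρ
  have R1' := apriori hα hf gX' S' hpa ha1 hρ'
  have hN23 : N ^ 2 ≤ N ^ 3 := pow_le_pow_right₀ hN1 (by norm_num)
  have hN3 : 0 ≤ N ^ 3 := by positivity
  have B1 : ∀ s t, 0 ≤ s → s ≤ t → t ≤ T → ‖Y t - Y s‖ ≤ (4 * N ^ 3) * (t - s) ^ α := by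
    intro s t h0 h1 h2
    refine (Y_bound hf gX h0 h1 h2 (R1 s t h0 h1 h2) ((hpa s t h0 h1 h2).trans hale)
      (by positivity)).trans ?_
    exact mul_le_mul_of_nonneg_right (by linarith) (pw_nonneg h1)
  have B1' : ∀ s t, 0 ≤ s → s ≤ t → t ≤ T → ‖Y' t - Y' s‖ ≤ (4 * N ^ 3) * (t - s) ^ α := by
    intro s t h0 h1 h2
    refine (Y_bound hf gX' h0 h1 h2 (R1' s t h0 h1 h2) ((hpa s t h0 h1 h2).trans hale)
      (by positivity)).trans ?_
    exact mul_le_mul_of_nonneg_right (by linarith) (pw_nonneg h1)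
  have R2 : ∀ s t, 0 ≤ s → s ≤ t → t ≤ T →
      ‖RR f X Y s t‖ ≤ (4 * N ^ 3) * ((t - s) ^ α) ^ 2 := fun s t h0 h1 h2 =>
    (R1 s t h0 h1 h2).trans (mul_le_mul_of_nonneg_right (by linarith) (sq_nonneg _))
  have R2' : ∀ s t, 0 ≤ s → s ≤ t → t ≤ T →
      ‖RR f X' Y' s t‖ ≤ (4 * N ^ 3) * ((t - s) ^ α) ^ 2 := fun s t h0 h1 h2 =>
    (R1' s t h0 h1 h2).trans (mul_le_mul_of_nonneg_right (by linarith) (sq_nonneg _))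
  have bX := holder_sub_bdd hX.2.2.1 hX'.2.2.1
  have bXX := holder2_sub_bdd hX.2.2.2 hX'.2.2.2
  have k1 : 0 ≤ sSup (holderRatios α 1 (fun u => X u - X' u)) := holder_nonneg
  have k2 : 0 ≤ sSup (holderRatios2 α 1 (fun u v => XX u v - XX' u v)) := holder2_nonneg
  have k3 : 0 ≤ ‖ξ - ξ'‖ := norm_nonneg _
  have dX : ∀ s t, 0 ≤ s → s ≤ t → t ≤ T → ‖(X t - X s) - (X' t - X' s)‖ ≤
      sSup (holderRatios α 1 (fun u => X u - X' u)) * (t - s) ^ α := by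
    intro s t h0 h1 h2
    refine le_trans (le_of_eq ?_) (holder_le hα bX h0 h1 (h2.trans hT1))
    congr 1; abel
  have dXX : ∀ s t, 0 ≤ s → s ≤ t → t ≤ T → ‖XX s t - XX' s t‖ ≤
      sSup (holderRatios2 α 1 (fun u v => XX u v - XX' u v)) * ((t - s) ^ α) ^ 2 := by
    intro s t h0 h1 h2
    refine holder2_le bXX (fun s h0 h1 => ?_) hα h0 h1 (h2.trans hT1)
    simp [hX.diag s h0 h1, hX'.diag s h0 h1]
  obtain ⟨r, hr⟩ : ∃ r, r = ‖ξ - ξ'‖ +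
      (sSup (holderRatios α 1 (fun u => X u - X' u)) +
        sSup (holderRatios2 α 1 (fun u v => XX u v - XX' u v))) := ⟨_, rfl⟩
  rw [← hr]
  have hr0 : 0 ≤ r := by rw [hr]; positivity
  have hrξ : ‖Y 0 - Y' 0‖ ≤ r := by
    rw [hY.start_eq hT0.le, hY'.start_eq hT0.le, hr]; linarith
  have step := fun (w : ℝ) (hw0 : 0 ≤ w) => diff_step hα hf gX gX' SD hpa ha1 ha0.le rfl
    R2 R2' B1 B1' hrξ
    (fun s t h0 h1 h2 => (dX s t h0 h1 h2).trans
      (mul_le_mul_of_nonneg_right (by linarith) (pw_nonneg h1)))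
    (fun s t h0 h1 h2 => (dXX s t h0 h1 h2).trans
      (mul_le_mul_of_nonneg_right (by linarith) (sq_nonneg _))) (w := w) hw0
  have hstart : ∀ s t, 0 ≤ s → s ≤ t → t ≤ T →
      ‖(Y t - Y s) - (Y' t - Y' s)‖ ≤ (8 * N ^ 3) * (t - s) ^ α ∧
      ‖RR f X Y s t - RR f X' Y' s t‖ ≤ (8 * N ^ 3) * ((t - s) ^ α) ^ 2 := by
    intro s t h0 h1 h2
    constructor
    · refine (norm_sub_le _ _).trans ?_
      linarith [B1 s t h0 h1 h2, B1' s t h0 h1 h2]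
    · refine (norm_sub_le _ _).trans ?_
      linarith [R2 s t h0 h1 h2, R2' s t h0 h1 h2]
  have fin := bootstrap (P := fun w => ∀ s t, 0 ≤ s → s ≤ t → t ≤ T →
      ‖(Y t - Y s) - (Y' t - Y' s)‖ ≤ w * (t - s) ^ α ∧
      ‖RR f X Y s t - RR f X' Y' s t‖ ≤ w * ((t - s) ^ α) ^ 2) (c := 3 * N ^ 3 * r)
    (by positivity)
    (fun K h s t h0 h1 h2 => ⟨le_mul_of_eps fun ε hε => (h ε hε s t h0 h1 h2).1,
      le_mul_of_eps fun ε hε => (h ε hε s t h0 h1 h2).2⟩)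
    (fun K K' hK h s t h0 h1 h2 =>
      ⟨(h s t h0 h1 h2).1.trans (mul_le_mul_of_nonneg_right hK (pw_nonneg h1)),
       (h s t h0 h1 h2).2.trans (mul_le_mul_of_nonneg_right hK (sq_nonneg _))⟩)
    step hstart
  have := (fin s t hs hst.le ht).1
  calc _ = ‖(Y t - Y s) - (Y' t - Y' s)‖ := by congr 1; abel
    _ ≤ _ := this
    _ = _ := by ring

end
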